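/- arXiv:1608.03499 — 4 statements merged into one kernel-verified Lean document; each statement's English description precedes it below -/
import Mathlib

section
/- The principal minor lattice L'_n is contained in the Veronese lattice L_n, and the quotient group L_n/L'_n is isomorphic to (ℤ/2ℤ)^{c_{n−1}}. -/
open scoped BigOperators

namespace Veronese

open MvPolynomial

/-- `c m = C(m,2)`. -/
def c (m : ℕ) : ℕ := m.choose 2

variable (n : ℕ)

/-- multiplicity (as ℤ) of the index `i` in the unordered pair `s`. -/
def wt (s : Sym2 (Fin n)) : Fin n → ℤ :=
  Sym2.lift ⟨fun a b i => (if i = a then 1 else 0) + (if i = b then 1 else 0),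
    fun a b => funext fun i => add_comm _ _⟩ s

/-- The Veronese grading map `V_n : ℤ^P → ℤ^n`, sending `e_{ij} ↦ e_i + e_j`. -/
def Vmap : (Sym2 (Fin n) → ℤ) →ₗ[ℤ] (Fin n → ℤ) where
  toFun u := fun i => ∑ s : Sym2 (Fin n), u s * wt n s i
  map_add' u v := funext fun i => by
    simp [add_mul, Finset.sum_add_distrib]
  map_smul' m u := funext fun i => by
    simp [Finset.mul_sum, smul_eq_mul, mul_assoc]

/-- The Veronese lattice `L_n = ker V_n`. -/
def Llat : Submodule ℤ (Sym2 (Fin n) → ℤ) := LinearMap.ker (Vmap n)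

/-- standard basis vector `e_{ij}` of `ℤ^P`. -/
def e (i j : Fin n) : Sym2 (Fin n) → ℤ := Pi.single s(i, j) 1

lemma e_comm (i j : Fin n) : e n i j = e n j i := by
  unfold e; rw [Sym2.eq_swap]

/-- `[ij|ij] = e_{ii} + e_{jj} - 2 e_{ij}`. -/
def minorVec (i j : Fin n) : Sym2 (Fin n) → ℤ := e n i i + e n j j - 2 • e n i j

/-- The principal minor lattice `L'_n`. -/
def L'lat : Submodule ℤ (Sym2 (Fin n) → ℤ) :=
  Submodule.span ℤ {v | ∃ i j : Fin n, i < j ∧ v = minorVec n i j}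

/-- the last index `n` (zero-based: `n-1`) of `Fin n`. -/
def lastIdx (hn : 0 < n) : Fin n := ⟨n - 1, Nat.sub_lt hn one_pos⟩

/-- embedding `[n-1] → [n]`. -/
def ι : Fin (n - 1) → Fin n := Fin.castLE (Nat.sub_le n 1)

/-- `[in|jn] = e_{ij} + e_{nn} - e_{in} - e_{jn}` for `i,j ∈ [n-1]`. -/
def Bvec (hn : 0 < n) : Sym2 (Fin (n - 1)) → (Sym2 (Fin n) → ℤ) :=
  Sym2.lift ⟨fun i j =>
      e n (ι n i) (ι n j) + e n (lastIdx n hn) (lastIdx n hn)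
        - e n (ι n i) (lastIdx n hn) - e n (ι n j) (lastIdx n hn),
    fun i j => by dsimp only; rw [e_comm n (ι n i) (ι n j)]; ring⟩

/-- The family `B'`: `[in|in]` on the diagonal, `2[in|jn]` off it. -/
noncomputable def B'vec (hn : 0 < n) (s : Sym2 (Fin (n - 1))) : Sym2 (Fin n) → ℤ :=
  if s.IsDiag then Bvec n hn s else 2 • Bvec n hn s

/-- multiplicity (as ℕ) of the index `i` in the unordered pair `s`. -/
def wtN (s : Sym2 (Fin n)) : Fin n → ℕ :=
  Sym2.lift ⟨fun a b i => (if i = a then 1 else 0) + (if i = b then 1 else 0),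
    fun a b => funext fun i => add_comm _ _⟩ s

/-- The Veronese degree of an exponent vector `u ∈ ℕ^P`. -/
def VN (u : Sym2 (Fin n) →₀ ℕ) : Fin n → ℕ := fun i => ∑ s : Sym2 (Fin n), u s * wtN n s i

/-- The fiber `V_n^{-1}[b] = {u ∈ ℕ^P : V_n u = b}`. -/
def fiber (b : Fin n → ℕ) : Set (Sym2 (Fin n) →₀ ℕ) := {u | VN n u = b}

/-- natural inclusion `ℕ^P → ℤ^P`. -/
def toZ (u : Sym2 (Fin n) →₀ ℕ) : Sym2 (Fin n) → ℤ := fun s => (u s : ℤ)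

lemma fiber_finite (b : Fin n → ℕ) : (fiber n b).Finite := by
  classical
  have hsub : fiber n b ⊆
      ↑(Finset.Iic ((Finsupp.equivFunOnFinite.symm fun _ => ∑ i, b i) : Sym2 (Fin n) →₀ ℕ)) := by
    intro u hu
    simp only [Finset.coe_Iic, Set.mem_Iic, Finsupp.le_def]
    intro s
    induction s using Sym2.ind with
    | _ i j =>
      have h1 : u s(i, j) * wtN n s(i, j) i ≤ VN n u i :=
        Finset.single_le_sum (f := fun s => u s * wtN n s i)
          (fun s _ => Nat.zero_le _) (Finset.mem_univ s(i, j))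
      have h2 : 1 ≤ wtN n s(i, j) i := by
        simp only [wtN, Sym2.lift_mk, if_pos rfl]
        exact Nat.le_add_right 1 _
      have h3 : u s(i, j) ≤ b i := by
        have hb : VN n u i = b i := congrFun hu i
        calc u s(i, j) ≤ u s(i, j) * wtN n s(i, j) i := Nat.le_mul_of_pos_right _ h2
          _ ≤ VN n u i := h1
          _ = b i := hb
      calc u s(i, j) ≤ b i := h3
        _ ≤ ∑ i, b i := Finset.single_le_sum (fun _ _ => Nat.zero_le _) (Finset.mem_univ _)
        _ = (Finsupp.equivFunOnFinite.symm fun _ => ∑ i, b i) s(i, j) := by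
            simp
  exact Set.Finite.subset (Finset.finite_toSet _) hsub

variable (k : Type*) [Field k]

/-- the polynomial ring `k[x_{ij}]`. -/
abbrev R := MvPolynomial (Sym2 (Fin n)) k

/-- The principal minor ideal `J_n`. -/
noncomputable def Jideal : Ideal (R n k) :=
  Ideal.span {f | ∃ i j : Fin n, i < j ∧ f = X s(i, i) * X s(j, j) - X s(i, j) ^ 2}

/-- The map `x_{ij} ↦ t_i t_j`. -/
noncomputable def veroHom : R n k →ₐ[k] MvPolynomial (Fin n) k :=
  aeval fun s => Sym2.lift ⟨fun a b => X a * X b, fun a b => mul_comm _ _⟩ s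

/-- The second Veronese ideal `I_n`. -/
noncomputable def Iideal : Ideal (R n k) := RingHom.ker (veroHom n k)

/-- A ℤ₂-twisting: an automorphism sending each variable to ± itself. -/
def IsTwisting (φ : R n k ≃ₐ[k] R n k) : Prop :=
  ∀ s : Sym2 (Fin n), φ (X s) = X s ∨ φ (X s) = - X s

/-- `f` is V_n-homogeneous of degree `b`. -/
def VHomog (f : R n k) (b : Fin n → ℕ) : Prop := ∀ u ∈ f.support, VN n u = b

/-- The fiber over `b` as a finite set. -/
noncomputable def fiberFinset (b : Fin n → ℕ) : Finset (Sym2 (Fin n) →₀ ℕ) :=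
  (fiber_finite n b).toFinset

/-- generating function of the canonical (0/1 off-diagonal) representatives of
the fiber over `b`. -/
noncomputable def pplusAt (b : Fin n → ℕ) : R n k :=
  ∑ u ∈ (fiberFinset n b).filter (fun u => ∀ s : Sym2 (Fin n), ¬s.IsDiag → u s ≤ 1),
    monomial u (1 : k)

/-- `p⁺_{n,j}` (for `n` odd): fiber over `(n-2,…,n-2) + e_j`. -/
noncomputable def pplusOdd (j : Fin n) : R n k :=
  pplusAt n k fun i => (n - 2) + if i = j then 1 else 0

/-- `p⁺_n` (for `n` even): fiber over `(n-2,…,n-2)`. -/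
noncomputable def pplusEven : R n k :=
  pplusAt n k fun _ => n - 2

/-- `p_n = ∏_{i<j∈[n-1]} (x_{ij} x_{nn} + x_{in} x_{jn})`. -/
noncomputable def pn (hn : 0 < n) : R n k :=
  ∏ p ∈ Finset.univ.filter (fun p : Fin (n - 1) × Fin (n - 1) => p.1 < p.2),
    (X s(ι n p.1, ι n p.2) * X s(lastIdx n hn, lastIdx n hn)
      + X s(ι n p.1, lastIdx n hn) * X s(ι n p.2, lastIdx n hn))



lemma wt_mk (a b i : Fin n) :
    wt n s(a, b) i = (if i = a then 1 else 0) + (if i = b then 1 else 0) := rfl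

lemma Vmap_apply (u : Sym2 (Fin n) → ℤ) (i : Fin n) :
    Vmap n u i = ∑ s : Sym2 (Fin n), u s * wt n s i := rfl

lemma Vmap_e (a b i : Fin n) : Vmap n (e n a b) i = wt n s(a, b) i := by
  rw [Vmap_apply, Finset.sum_eq_single s(a, b)]
  · simp [e]
  · intro s _ hs
    simp [e, Pi.single_apply, hs]
  · simp

lemma minorVec_mem_L (i j : Fin n) : minorVec n i j ∈ Llat n := by
  rw [Llat, LinearMap.mem_ker]
  funext t
  simp only [minorVec, map_sub, map_add, map_nsmul, Pi.sub_apply, Pi.add_apply, Pi.smul_apply,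
    Vmap_e, wt_mk, Pi.zero_apply]
  simp only [nsmul_eq_mul]
  push_cast
  ring

lemma L'_le_L : L'lat n ≤ Llat n := by
  rw [L'lat, Submodule.span_le]
  rintro v ⟨i, j, _, rfl⟩
  exact minorVec_mem_L n i j

lemma Bvec_mk (hn : 0 < n) (i j : Fin (n - 1)) : Bvec n hn s(i, j) =
    e n (ι n i) (ι n j) + e n (lastIdx n hn) (lastIdx n hn)
        - e n (ι n i) (lastIdx n hn) - e n (ι n j) (lastIdx n hn) := rfl

lemma Bvec_mem_L (hn : 0 < n) (s : Sym2 (Fin (n - 1))) : Bvec n hn s ∈ Llat n := by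
  induction s using Sym2.ind with
  | _ i j =>
    rw [Llat, LinearMap.mem_ker, Bvec_mk]
    funext t
    simp only [map_sub, map_add, Pi.sub_apply, Pi.add_apply, Vmap_e, wt_mk, Pi.zero_apply]
    ring

lemma ι_inj : Function.Injective (ι n) := Fin.castLE_injective _

lemma ι_ne_last (hn : 0 < n) (i : Fin (n - 1)) : ι n i ≠ lastIdx n hn := by
  intro h
  have := congrArg Fin.val h
  simp [ι, lastIdx] at this
  omega

lemma exists_ι (hn : 0 < n) (a : Fin n) (ha : a ≠ lastIdx n hn) : ∃ i, ι n i = a := by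
  have : (a : ℕ) ≠ n - 1 := fun h => ha (Fin.ext h)
  exact ⟨⟨a, by omega⟩, Fin.ext rfl⟩

lemma Bvec_apply (hn : 0 < n) (s t : Sym2 (Fin (n - 1))) :
    Bvec n hn s (t.map (ι n)) = if t = s then 1 else 0 := by
  induction s using Sym2.ind with
  | _ i j =>
    have h1 : (t.map (ι n) = s(ι n i, ι n j)) ↔ t = s(i, j) := by
      rw [← Sym2.map_mk]
      exact (Sym2.map.injective (ι_inj n)).eq_iff
    have h2 : ∀ a, t.map (ι n) ≠ s(a, lastIdx n hn) := by
      intro a h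
      have : lastIdx n hn ∈ t.map (ι n) := by rw [h]; exact Sym2.mem_mk_right _ _
      rw [Sym2.mem_map] at this
      obtain ⟨b, _, hb⟩ := this
      exact ι_ne_last n hn b hb
    simp [Bvec_mk, e, Pi.single_apply, h1, h2]

/-- The vector `[ij|ij]` indexed by the unordered pair. -/
def mv : Sym2 (Fin n) → (Sym2 (Fin n) → ℤ) :=
  Sym2.lift ⟨minorVec n, fun i j => by
    unfold minorVec; rw [e_comm n i j, add_comm (e n i i)]⟩

lemma mv_mk (i j : Fin n) : mv n s(i, j) = minorVec n i j := rfl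

lemma mv_mem (s : Sym2 (Fin n)) (hs : ¬ s.IsDiag) : mv n s ∈ L'lat n := by
  induction s using Sym2.ind with
  | _ i j =>
    rw [Sym2.mk_isDiag_iff] at hs
    rcases lt_or_gt_of_ne hs with h | h
    · exact Submodule.subset_span ⟨i, j, h, rfl⟩
    · rw [Sym2.eq_swap]
      exact Submodule.subset_span ⟨j, i, h, rfl⟩

lemma mv_apply (s t : Sym2 (Fin n)) (ht : ¬ t.IsDiag) :
    mv n s t = if t = s then -2 else 0 := by
  have h : ∀ a, t ≠ s(a, a) := by
    rintro a rfl
    exact ht rfl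
  induction s using Sym2.ind with
  | _ i j =>
    simp [mv_mk, minorVec, e, Pi.single_apply, h]
    split_ifs <;> rfl

lemma mem_L'_of_even (u : Sym2 (Fin n) → ℤ) (hu : u ∈ Llat n)
    (he : ∀ s : Sym2 (Fin n), ¬ s.IsDiag → (2 : ℤ) ∣ u s) : u ∈ L'lat n := by
  classical
  set v := ∑ s ∈ Finset.univ.filter (fun s : Sym2 (Fin n) => ¬ s.IsDiag), (u s / 2) • mv n s
    with hv
  have hvL' : v ∈ L'lat n := by
    refine Submodule.sum_mem _ fun s hs => Submodule.smul_mem _ _ (mv_mem n s ?_)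
    simpa using hs
  have hoff : ∀ t : Sym2 (Fin n), ¬ t.IsDiag → (u + v) t = 0 := by
    intro t ht
    have : v t = (u t / 2) * (-2) := by
      rw [hv, Finset.sum_apply, Finset.sum_eq_single t]
      · simp [mv_apply n t t ht]
      · intro s _ hs
        simp [mv_apply n s t ht, hs.symm]
      · intro h
        simp [ht] at h
    rw [Pi.add_apply, this]
    have := he t ht
    omega
  have hw : u + v ∈ Llat n := Submodule.add_mem _ hu (L'_le_L n hvL')
  have hz : u + v = 0 := by
    funext t
    by_cases ht : t.IsDiag
    · induction t using Sym2.ind with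
      | _ i j =>
        rw [Sym2.mk_isDiag_iff] at ht
        subst ht
        rw [Llat, LinearMap.mem_ker] at hw
        have h := congrFun hw i
        rw [Vmap_apply, Finset.sum_eq_single s(i, i)] at h
        · simpa [wt_mk] using h
        · intro s _ hs
          induction s using Sym2.ind with
          | _ a b =>
            by_cases hab : a = b
            · subst hab
              have : i ≠ a := by rintro rfl; exact hs rfl
              simp [wt_mk, this]
            · rw [hoff _ (by simpa using hab), zero_mul]
        · simp
    · exact hoff t ht
  rw [eq_neg_of_add_eq_zero_left hz]
  exact Submodule.neg_mem _ hvL'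

lemma even_of_even (hn : 0 < n) (u : Sym2 (Fin n) → ℤ) (hu : u ∈ Llat n)
    (he : ∀ s : Sym2 (Fin (n - 1)), ¬ s.IsDiag → (u (s.map (ι n)) : ZMod 2) = 0)
    (s : Sym2 (Fin n)) (hs : ¬ s.IsDiag) : (2 : ℤ) ∣ u s := by
  have h0 : ∀ a b : Fin n, a ≠ b → a ≠ lastIdx n hn → b ≠ lastIdx n hn →
      (u s(a, b) : ZMod 2) = 0 := by
    intro a b hab ha hb
    obtain ⟨i, rfl⟩ := exists_ι n hn a ha
    obtain ⟨j, rfl⟩ := exists_ι n hn b hb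
    exact he s(i, j) (by rw [Sym2.mk_isDiag_iff]; rintro rfl; exact hab rfl)
  have h1 : ∀ i : Fin n, i ≠ lastIdx n hn → (u s(i, lastIdx n hn) : ZMod 2) = 0 := by
    intro i hi
    rw [Llat, LinearMap.mem_ker] at hu
    have h := congrArg (Int.cast : ℤ → ZMod 2) (congrFun hu i)
    rw [Vmap_apply, Int.cast_sum, Finset.sum_eq_single s(i, lastIdx n hn)] at h
    · simpa [wt_mk, hi] using h
    · intro s _ hs
      induction s using Sym2.ind with
      | _ a b =>
        by_cases hab : a = b
        · subst hab
          rw [wt_mk, ← two_mul]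
          push_cast
          rw [show (2 : ZMod 2) = 0 from rfl]
          ring
        · by_cases ha : a = lastIdx n hn
          · subst ha
            have : i ≠ b := by rintro rfl; exact hs Sym2.eq_swap
            simp [wt_mk, hi, this]
          · by_cases hb : b = lastIdx n hn
            · subst hb
              have : i ≠ a := by rintro rfl; exact hs rfl
              simp [wt_mk, hi, this]
            · rw [Int.cast_mul, h0 a b hab ha hb, zero_mul]
    · simp
  have : (u s : ZMod 2) = 0 := by
    induction s using Sym2.ind with
    | _ a b =>
      rw [Sym2.mk_isDiag_iff] at hs
      by_cases ha : a = lastIdx n hn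
      · subst ha
        rw [Sym2.eq_swap]
        exact h1 b (Ne.symm hs)
      · by_cases hb : b = lastIdx n hn
        · subst hb
          exact h1 a ha
        · exact h0 a b hs ha hb
  exact_mod_cast (ZMod.intCast_zmod_eq_zero_iff_dvd _ 2).1 this

/-- Parities of the off-diagonal coordinates in the upper left block. -/
def par : ↥(Llat n) →ₗ[ℤ] ({s : Sym2 (Fin (n - 1)) // ¬ s.IsDiag} → ZMod 2) where
  toFun u := fun s => (u.1 (s.1.map (ι n)) : ZMod 2)
  map_add' u v := by funext s; simp
  map_smul' m u := by funext s; simp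

lemma par_apply (u : ↥(Llat n)) (s : {s : Sym2 (Fin (n - 1)) // ¬ s.IsDiag}) :
    par n u s = (u.1 (s.1.map (ι n)) : ZMod 2) := rfl

lemma par_surj (hn : 0 < n) : Function.Surjective (par n) := by
  classical
  intro g
  refine ⟨∑ s : {s : Sym2 (Fin (n - 1)) // ¬ s.IsDiag},
    ((g s).val : ℤ) • ⟨Bvec n hn s.1, Bvec_mem_L n hn s.1⟩, ?_⟩
  funext t
  rw [map_sum, Finset.sum_apply, Finset.sum_eq_single t]
  · rw [map_smul, Pi.smul_apply, par_apply]
    simp only [Bvec_apply, if_true, Int.cast_one]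
    rw [zsmul_eq_mul, mul_one, Int.cast_natCast, ZMod.natCast_zmod_val]
  · intro s _ hs
    have : t.1 ≠ s.1 := fun h => hs (Subtype.ext h.symm)
    simp [par_apply, Bvec_apply, this]
  · simp

lemma par_ker (hn : 0 < n) : (L'lat n).comap (Llat n).subtype = LinearMap.ker (par n) := by
  ext ⟨u, hu⟩
  rw [Submodule.mem_comap, LinearMap.mem_ker, Submodule.subtype_apply]
  constructor
  · intro h
    change u ∈ L'lat n at h
    funext s
    rw [par_apply]
    change ((u (s.1.map (ι n)) : ℤ) : ZMod 2) = 0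
    have hs : ¬ (s.1.map (ι n)).IsDiag := by
      rw [Sym2.isDiag_map (ι_inj n)]
      exact s.2
    clear hu
    unfold L'lat at h
    induction h using Submodule.span_induction with
    | mem x hx =>
      obtain ⟨i, j, _, rfl⟩ := hx
      rw [← mv_mk, mv_apply n _ _ hs]
      split_ifs <;> rfl
    | zero => simp
    | add x y _ _ hx hy => simp [hx, hy]
    | smul a x _ hx => simp [hx]
  · intro h
    refine mem_L'_of_even n u hu (even_of_even n hn u hu fun s hs => ?_)
    exact congrFun h ⟨s, hs⟩

/-- `L'_n ⊆ L_n` and `L_n / L'_n ≅ (ℤ/2ℤ)^{c_{n-1}}`. -/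
theorem lattice_quotient_iso (n : ℕ) (hn : 2 ≤ n) :
    L'lat n ≤ Llat n ∧
    Nonempty ((↥(Llat n) ⧸ (L'lat n).comap (Llat n).subtype) ≃+
      (Fin (c (n - 1)) → ZMod 2)) := by
  classical
  have hn0 : 0 < n := by omega
  refine ⟨L'_le_L n, ?_⟩
  have hcard : Fintype.card {s : Sym2 (Fin (n - 1)) // ¬ s.IsDiag} = c (n - 1) := by
    rw [Sym2.card_subtype_not_diag, Fintype.card_fin, c]
  exact ⟨(((Submodule.quotEquivOfEq _ _ (par_ker n hn0)).trans
    (LinearMap.quotKerEquivOfSurjective (par n) (par_surj n hn0))).trans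
    (LinearEquiv.funCongrLeft ℤ (ZMod 2) (Fintype.equivFinOfCardEq hcard).symm)).toAddEquiv⟩

end Veronese
end

section
/- The principal minor ideal J_n is the lattice ideal of L'_n: J_n = ⟨ x^{u⁺} − x^{u⁻} : u ∈ L'_n ⟩, where u = u⁺ − u⁻ is the decomposition of u ∈ ℤ^P into its componentwise positive and negative parts u⁺, u⁻ ∈ ℕ^P. In particular, for every u ∈ L'_n the binomial x^{u⁺} − x^{u⁻} lies in J_n, and these binomials generate J_n. -/
open scoped BigOperators

namespace Veronese

open MvPolynomial

variable (n : ℕ)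

variable (k : Type*) [Field k]

/-- the positive part of `u ∈ ℤ^P`, as an exponent vector in `ℕ^P`. -/
noncomputable def posPart (u : Sym2 (Fin n) → ℤ) : Sym2 (Fin n) →₀ ℕ :=
  Finsupp.equivFunOnFinite.symm fun s => (u s).toNat

/-- parity residue off the diagonal. -/
def rr (u : Sym2 (Fin n) → ℕ) (s : Sym2 (Fin n)) : ℕ :=
  if s.IsDiag then 0 else u s % 2

/-- diagonal contribution of the entry `s`. -/
def gg (u : Sym2 (Fin n) → ℕ) (s : Sym2 (Fin n)) (i : Fin n) : ℕ :=
  ((u s - rr n u s) * wtN n s i) / 2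

lemma two_mul_gg (u : Sym2 (Fin n) → ℕ) (s : Sym2 (Fin n)) (i : Fin n) :
    2 * gg n u s i = (u s - rr n u s) * wtN n s i := by
  unfold gg
  apply Nat.mul_div_cancel'
  induction s using Sym2.ind with
  | _ a b =>
    by_cases h : a = b
    · subst h
      apply Dvd.dvd.mul_left
      simp only [wtN, Sym2.lift_mk]
      split_ifs <;> simp
    · apply Dvd.dvd.mul_right
      simp only [rr, Sym2.mk_isDiag_iff, h, if_false]
      omega

lemma wtN_cast (s : Sym2 (Fin n)) (i : Fin n) : ((wtN n s i : ℕ) : ℤ) = wt n s i := by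
  induction s using Sym2.ind with
  | _ a b => simp [wtN, wt]

lemma rr_le (u : Sym2 (Fin n) → ℕ) (s : Sym2 (Fin n)) : rr n u s ≤ u s := by
  unfold rr
  split_ifs
  · exact Nat.zero_le _
  · exact Nat.mod_le _ _

lemma prod_wtN {A : Type*} [CommRing A] (x : Sym2 (Fin n) → A) (a b : Fin n) :
    ∏ i, x s(i, i) ^ wtN n s(a, b) i = x s(a, a) * x s(b, b) := by
  simp only [wtN, Sym2.lift_mk, pow_add, Finset.prod_mul_distrib, pow_ite, pow_one, pow_zero,
    Finset.prod_ite_eq', Finset.mem_univ, if_true]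

lemma factor_normal {A : Type*} [CommRing A] (x : Sym2 (Fin n) → A)
    (hx : ∀ i j, x s(i, j) ^ 2 = x s(i, i) * x s(j, j)) (u : Sym2 (Fin n) → ℕ)
    (s : Sym2 (Fin n)) :
    x s ^ u s = x s ^ rr n u s * ∏ i, x s(i, i) ^ gg n u s i := by
  induction s using Sym2.ind with
  | _ a b =>
    by_cases h : a = b
    · subst h
      have hg : ∀ i, gg n u s(a, a) i = if i = a then u s(a, a) else 0 := by
        intro i
        have := two_mul_gg n u s(a, a) i
        simp only [rr, Sym2.mk_isDiag_iff, if_true, wtN, Sym2.lift_mk] at this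
        split_ifs at this ⊢ <;> omega
      simp only [hg, rr, Sym2.mk_isDiag_iff, if_true, pow_zero, one_mul, pow_ite,
        Finset.prod_ite_eq', Finset.mem_univ]
    · have hr : rr n u s(a, b) = u s(a, b) % 2 := by simp [rr, h]
      have hg : ∀ i, gg n u s(a, b) i = wtN n s(a, b) i * (u s(a, b) / 2) := by
        intro i
        have := two_mul_gg n u s(a, b) i
        have h2 : u s(a, b) - rr n u s(a, b) = 2 * (u s(a, b) / 2) := by omega
        rw [h2] at this
        nlinarith
      simp only [hg, pow_mul, Finset.prod_pow, prod_wtN, ← hx, hr]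
      rw [← pow_mul, ← pow_add, Nat.mod_add_div]

lemma prod_normal {A : Type*} [CommRing A] (x : Sym2 (Fin n) → A)
    (hx : ∀ i j, x s(i, j) ^ 2 = x s(i, i) * x s(j, j)) (u : Sym2 (Fin n) → ℕ) :
    ∏ s, x s ^ u s = (∏ s, x s ^ rr n u s) * ∏ i, x s(i, i) ^ ∑ s, gg n u s i := by
  rw [Finset.prod_congr rfl (fun s _ => factor_normal n x hx u s), Finset.prod_mul_distrib,
    Finset.prod_comm]
  simp only [Finset.prod_pow_eq_pow_sum]

lemma L'lat_even {w : Sym2 (Fin n) → ℤ} (hw : w ∈ L'lat n) (s : Sym2 (Fin n))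
    (hs : ¬ s.IsDiag) : (2 : ℤ) ∣ w s := by
  induction hw using Submodule.span_induction with
  | mem v hv =>
    obtain ⟨i, j, -, rfl⟩ := hv
    have h1 : ∀ a, e n a a s = 0 := by
      intro a
      unfold e
      rw [Pi.single_eq_of_ne]
      rintro rfl
      simp at hs
    simp [minorVec, h1]
  | zero => simp
  | add a b _ _ ha hb => exact dvd_add ha hb
  | smul c a _ ha => exact Dvd.dvd.mul_left ha _

lemma L'lat_ker {w : Sym2 (Fin n) → ℤ} (hw : w ∈ L'lat n) : Vmap n w = 0 := by
  induction hw using Submodule.span_induction with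
  | mem v hv =>
    obtain ⟨i, j, -, rfl⟩ := hv
    funext l
    simp only [minorVec, map_add, map_sub, map_nsmul, Pi.add_apply, Pi.sub_apply, Pi.smul_apply,
      Vmap_e]
    simp [wt]
    ring
  | zero => simp
  | add a b _ _ ha hb => simp [ha, hb]
  | smul c a _ ha => rw [map_smul, ha, smul_zero]

lemma prod_eq_of_sub_mem {A : Type*} [CommRing A] (x : Sym2 (Fin n) → A)
    (hx : ∀ i j, x s(i, j) ^ 2 = x s(i, i) * x s(j, j)) (u v : Sym2 (Fin n) → ℕ)
    (w : Sym2 (Fin n) → ℤ) (hw : w ∈ L'lat n) (huv : ∀ s, (u s : ℤ) - v s = w s) :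
    ∏ s, x s ^ u s = ∏ s, x s ^ v s := by
  have hr : ∀ s, rr n u s = rr n v s := by
    intro s
    unfold rr
    split_ifs with h
    · rfl
    · have h1 := L'lat_even n hw s h
      have h2 := huv s
      omega
  have hgg : ∀ (u : Sym2 (Fin n) → ℕ) i, (2 : ℤ) * ((∑ s, gg n u s i : ℕ) : ℤ)
      = ∑ s, ((u s : ℤ) - rr n u s) * wt n s i := by
    intro u i
    push_cast
    rw [Finset.mul_sum]
    apply Finset.sum_congr rfl
    intro s _
    rw [← wtN_cast, ← Nat.cast_sub (rr_le n u s)]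
    exact_mod_cast two_mul_gg n u s i
  have hg : ∀ i, ∑ s, gg n u s i = ∑ s, gg n v s i := by
    intro i
    have h0 : ∑ s, w s * wt n s i = 0 := congrFun (L'lat_ker n hw) i
    have h3 : ∑ s, ((u s : ℤ) - rr n u s) * wt n s i
        - ∑ s, ((v s : ℤ) - rr n v s) * wt n s i = 0 := by
      rw [← h0, ← Finset.sum_sub_distrib]
      apply Finset.sum_congr rfl
      intro s _
      rw [← huv, hr]
      ring
    rw [← hgg, ← hgg] at h3
    omega
  rw [prod_normal n x hx u, prod_normal n x hx v]
  simp only [hr, hg]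

lemma monomial_eq_prod' (u : Sym2 (Fin n) →₀ ℕ) :
    (monomial u (1 : k) : R n k) = ∏ s, X s ^ u s := by
  rw [monomial_eq, C_1, one_mul, Finsupp.prod_fintype]
  simp

lemma binomial_mem (u : Sym2 (Fin n) → ℤ) (hu : u ∈ L'lat n) :
    monomial (posPart n u) (1 : k) - monomial (posPart n (-u)) (1 : k) ∈ Jideal n k := by
  rw [← Ideal.Quotient.eq, monomial_eq_prod', monomial_eq_prod', map_prod, map_prod]
  simp only [map_pow]
  apply prod_eq_of_sub_mem n (fun s => Ideal.Quotient.mk (Jideal n k) (X s)) _ _ _ u hu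
  · intro s
    simp only [posPart, Finsupp.equivFunOnFinite_symm_apply_apply, Pi.neg_apply]
    omega
  · have key : ∀ i j : Fin n, i < j → (Ideal.Quotient.mk (Jideal n k) (X s(i, j))) ^ 2 =
        Ideal.Quotient.mk (Jideal n k) (X s(i, i)) * Ideal.Quotient.mk (Jideal n k) (X s(j, j)) := by
      intro i j hij
      rw [← map_pow, ← map_mul]
      symm
      rw [Ideal.Quotient.eq]
      exact Ideal.subset_span ⟨i, j, hij, rfl⟩
    intro i j
    rcases lt_trichotomy i j with h | h | h
    · exact key i j h
    · subst h
      exact pow_two _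
    · have := key j i h
      rw [Sym2.eq_swap, mul_comm] at this
      exact this

/-- `J_n` is the lattice ideal of `L'_n`: every binomial
`x^{u⁺} - x^{u⁻}` with `u ∈ L'_n` lies in `J_n`, and these binomials generate `J_n`. -/
theorem principal_minor_ideal_is_lattice_ideal (n : ℕ) (hn : 2 ≤ n)
    (k : Type*) [Field k] :
    (∀ u ∈ L'lat n,
      monomial (posPart n u) (1 : k) - monomial (posPart n (-u)) (1 : k) ∈ Jideal n k) ∧
    Jideal n k = Ideal.span {f : R n k | ∃ u ∈ L'lat n,
      f = monomial (posPart n u) (1 : k) - monomial (posPart n (-u)) (1 : k)} := by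
  refine ⟨fun u hu => binomial_mem n k u hu, le_antisymm ?_ ?_⟩
  · unfold Jideal
    rw [Ideal.span_le]
    rintro f ⟨i, j, hij, rfl⟩
    apply Ideal.subset_span
    refine ⟨minorVec n i j, Submodule.subset_span ⟨i, j, hij, rfl⟩, ?_⟩
    have hne := hij.ne
    have h1 : posPart n (minorVec n i j) = Finsupp.single s(i, i) 1 + Finsupp.single s(j, j) 1 := by
      ext s
      simp only [posPart, minorVec, e, Finsupp.equivFunOnFinite_symm_apply_apply, Pi.add_apply,
        Pi.sub_apply, Pi.smul_apply, Pi.single_apply, Finsupp.add_apply, Finsupp.single_apply]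
      induction s using Sym2.ind with
      | _ a b => 
        simp only [Sym2.eq_iff]
        split_ifs <;> first | rfl | (exfalso; grind)
    have h2 : posPart n (-minorVec n i j) = Finsupp.single s(i, j) 2 := by
      ext s
      simp only [posPart, minorVec, e, Finsupp.equivFunOnFinite_symm_apply_apply, Pi.add_apply,
        Pi.sub_apply, Pi.smul_apply, Pi.single_apply, Finsupp.single_apply, Pi.neg_apply]
      induction s using Sym2.ind with
      | _ a b => 
        simp only [Sym2.eq_iff]
        split_ifs <;> first | rfl | (exfalso; grind)
    rw [h1, h2, X_pow_eq_monomial, X, X, monomial_mul, one_mul]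
  · rw [Ideal.span_le]
    rintro f ⟨u, hu, rfl⟩
    exact binomial_mem n k u hu

end Veronese
end

section
/- Let k[ℤ^P] denote the Laurent polynomial ring (the group algebra over k of the free abelian group ℤ^P) and let J_n·k[ℤ^P] be the extension of J_n to k[ℤ^P]. Then the quotient k[ℤ^P]/J_n·k[ℤ^P] is isomorphic as a k-algebra to the group algebra k[ℤ^n ⊕ (ℤ/2ℤ)^{c_{n−1}}]. -/
open scoped BigOperators

namespace Veronese

open MvPolynomial

variable (n : ℕ)

variable (k : Type*) [Field k]

/-- the Laurent polynomial ring `k[ℤ^P]`, i.e. the group algebra of `ℤ^P` over `k`. -/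
abbrev Laurent := AddMonoidAlgebra k (Sym2 (Fin n) → ℤ)

/-- the natural inclusion `k[ℕ^P] → k[ℤ^P]`, `x_{ij} ↦ x^{e_{ij}}`. -/
noncomputable def toLaurent : R n k →ₐ[k] Laurent n k :=
  aeval fun s => AddMonoidAlgebra.single (Pi.single s 1 : Sym2 (Fin n) → ℤ) (1 : k)

section aux
open Finset

lemma mapDom_smul {A G : Type*} (k : Type*) [Field k] (f : A → G) (r : k)
    (x : AddMonoidAlgebra k A) :
    AddMonoidAlgebra.mapDomain f (r • x) = r • AddMonoidAlgebra.mapDomain f x := by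
  ext
  simp [Finsupp.mapDomain_smul]

lemma algKer {A G : Type*} [AddCommGroup A] [AddCommGroup G] (k : Type*) [Field k]
    (φ : A →+ G) (σ : G → A) (hσ : ∀ g, φ (σ g) = g)
    (I : Ideal (AddMonoidAlgebra k A))
    (h0 : ∀ x ∈ I, AddMonoidAlgebra.mapDomainAlgHom k k φ x = 0)
    (h1 : ∀ u, φ u = 0 → AddMonoidAlgebra.single u (1 : k) - 1 ∈ I) :
    Nonempty ((AddMonoidAlgebra k A ⧸ I) ≃ₐ[k] AddMonoidAlgebra k G) := by
  have key : ∀ f : AddMonoidAlgebra k A,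
      f - AddMonoidAlgebra.mapDomain σ (AddMonoidAlgebra.mapDomain φ f) ∈ I := by
    intro f
    induction f using AddMonoidAlgebra.induction_on with
    | of u =>
      have hu := h1 (u - σ (φ u)) (by rw [map_sub, hσ, sub_self])
      have := I.mul_mem_left (AddMonoidAlgebra.single (σ (φ u)) (1 : k)) hu
      rw [mul_sub, AddMonoidAlgebra.single_mul_single, mul_one] at this
      simpa using this
    | add x y hx hy =>
      have := I.add_mem hx hy
      simp only [AddMonoidAlgebra.mapDomain_add]
      convert this using 1
      abel
    | smul r x hx =>
      have := I.smul_of_tower_mem r hx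
      simpa only [mapDom_smul, smul_sub] using this
  let Φ : AddMonoidAlgebra k A →ₐ[k] AddMonoidAlgebra k G :=
    AddMonoidAlgebra.mapDomainAlgHom k k φ
  have hs : Function.Surjective Φ := by
    intro g
    refine ⟨AddMonoidAlgebra.mapDomain σ g, ?_⟩
    induction g using AddMonoidAlgebra.induction_on with
    | of u => simp [Φ, hσ]
    | add x y hx hy => rw [AddMonoidAlgebra.mapDomain_add, map_add, hx, hy]
    | smul r x hx => rw [mapDom_smul, map_smul, hx]
  have hk : I = RingHom.ker Φ := by
    ext x
    refine ⟨fun h => h0 x h, fun h => ?_⟩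
    have h' : AddMonoidAlgebra.mapDomain φ x = 0 := h
    have := key x
    rwa [h', AddMonoidAlgebra.mapDomain_zero, sub_zero] at this
  exact ⟨(Ideal.quotientEquivAlgOfEq k hk).trans
    (Ideal.quotientKerAlgEquivOfSurjective hs)⟩

variable (m : ℕ)

/-- Off-diagonal pairs avoiding the last index. -/
abbrev TT := {s : Sym2 (Fin (m + 1)) // ¬ (s.IsDiag ∨ Fin.last m ∈ s)}

lemma card_TT : Nat.card (TT m) = m.choose 2 := by
  have h1 : Nat.card {a : Sym2 (Fin m) // ¬ a.IsDiag} = m.choose 2 := by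
    rw [Nat.card_eq_fintype_card, Sym2.card_subtype_not_diag, Fintype.card_fin]
  rw [← h1]
  symm
  refine Nat.card_eq_of_bijective
    (fun t => (⟨t.1.map Fin.castSucc, ?_⟩ : TT m)) ⟨?_, ?_⟩
  · obtain ⟨t, ht⟩ := t
    induction t using Sym2.ind with
    | _ i j =>
      simp only [Sym2.mk_isDiag_iff] at ht
      simp [ht, Fin.ext_iff] 
      have := i.2
      have := j.2
      have : (i : ℕ) ≠ j := fun h => ht (Fin.ext h)
      omega
  · intro a b h
    exact Subtype.ext (Sym2.map.injective (Fin.castSucc_injective m) (congrArg Subtype.val h))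
  · rintro ⟨t, ht⟩
    induction t using Sym2.ind with
    | _ i j =>
      simp only [Sym2.mk_isDiag_iff, Sym2.mem_iff, not_or] at ht
      obtain ⟨i', rfl⟩ := Fin.exists_castSucc_eq.2 (Ne.symm ht.2.1)
      obtain ⟨j', rfl⟩ := Fin.exists_castSucc_eq.2 (Ne.symm ht.2.2)
      refine ⟨⟨s(i', j'), ?_⟩, ?_⟩
      · simp only [Sym2.mk_isDiag_iff]
        rintro rfl
        exact ht.1 rfl
      · simp

/-- image of `e_s` in `ℤ^n`. -/
def ww (s : Sym2 (Fin (m + 1))) : Fin (m + 1) → ℤ :=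
  Sym2.lift ⟨fun i j => Pi.single i 1 + Pi.single j 1 - Pi.single (Fin.last m) 1,
    fun i j => by dsimp only; rw [add_comm (Pi.single i 1 : Fin (m + 1) → ℤ)]⟩ s

/-- `e_s + e_nn - e_in - e_jn`. -/
def BB (s : Sym2 (Fin (m + 1))) : Sym2 (Fin (m + 1)) → ℤ :=
  Sym2.lift ⟨fun i j => e _ i j + e _ (Fin.last m) (Fin.last m)
      - (e _ i (Fin.last m) + e _ j (Fin.last m)),
    fun i j => by dsimp only; rw [e_comm _ i j, add_comm (e _ i (Fin.last m))]⟩ s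

/-- first component. -/
def phi1 : (Sym2 (Fin (m + 1)) → ℤ) →ₗ[ℤ] (Fin (m + 1) → ℤ) :=
  Fintype.linearCombination ℤ (ww m)

/-- section of the first component. -/
def EE : (Fin (m + 1) → ℤ) →ₗ[ℤ] (Sym2 (Fin (m + 1)) → ℤ) :=
  Fintype.linearCombination ℤ (fun i => e (m + 1) i (Fin.last m))

/-- second component. -/
def phi2 : (Sym2 (Fin (m + 1)) → ℤ) →+ (TT m → ZMod 2) where
  toFun u t := (u t.1 : ZMod 2)
  map_zero' := by ext; simp
  map_add' u v := by ext; simp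

lemma phi1_e (i j : Fin (m + 1)) : phi1 m (e _ i j) =
    Pi.single i 1 + Pi.single j 1 - Pi.single (Fin.last m) 1 := by
  simp [phi1, e, ww]

lemma EE_single (i : Fin (m + 1)) : EE m (Pi.single i 1) = e _ i (Fin.last m) := by
  simp [EE]

lemma EE_phi1 (u : Sym2 (Fin (m + 1)) → ℤ) : EE m (phi1 m u) = u - ∑ s, u s • BB m s := by
  have h : ∀ s, EE m (ww m s) = Pi.single s 1 - BB m s := by
    intro s
    induction s using Sym2.ind with
    | _ i j =>
      simp only [ww, BB, Sym2.lift_mk, map_add, map_sub, EE_single, e]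
      abel
  have hu : u = ∑ s, u s • (Pi.single s 1 : Sym2 (Fin (m + 1)) → ℤ) := by
    ext t
    simp [Finset.sum_apply, Pi.single_apply]
  conv_rhs => rw [hu]
  simp only [phi1, Fintype.linearCombination_apply, map_sum, map_smul, h, smul_sub,
    Finset.sum_sub_distrib]
  rw [← hu]

lemma phi1_EE (a : Fin (m + 1) → ℤ) : phi1 m (EE m a) = a := by
  simp only [EE, Fintype.linearCombination_apply, map_sum, map_smul, phi1_e]
  ext t
  simp [Finset.sum_apply, Pi.single_apply]

lemma phi1_BB (s) : phi1 m (BB m s) = 0 := by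
  induction s using Sym2.ind with
  | _ i j =>
    simp only [BB, Sym2.lift_mk, map_add, map_sub, phi1_e]
    abel

lemma e_last_TT (i : Fin (m + 1)) (t : TT m) : e (m + 1) i (Fin.last m) t.1 = 0 := by
  unfold e
  rw [Pi.single_apply, if_neg]
  intro h
  apply t.2
  rw [h]
  right
  simp

lemma e_diag_TT (i : Fin (m + 1)) (t : TT m) : e (m + 1) i i t.1 = 0 := by
  unfold e
  rw [Pi.single_apply, if_neg]
  intro h
  apply t.2
  rw [h]
  left
  simp

lemma phi2_EE (a) : phi2 m (EE m a) = 0 := by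
  ext t
  simp [phi2, EE, Fintype.linearCombination_apply, Finset.sum_apply, e_last_TT]

lemma phi2_BB (s : TT m) : phi2 m (BB m s.1) = Pi.single s 1 := by
  ext t
  have : BB m s.1 t.1 = if t = s then 1 else 0 := by
    obtain ⟨s, hs⟩ := s
    induction s using Sym2.ind with
    | _ i j =>
      simp only [BB, Sym2.lift_mk, Pi.add_apply, Pi.sub_apply, e_last_TT]
      simp [e, Pi.single_apply, Subtype.ext_iff]
  simp [phi2, this, Pi.single_apply]

/-- the group homomorphism. -/
def phi : (Sym2 (Fin (m + 1)) → ℤ) →+ (Fin (m + 1) → ℤ) × (TT m → ZMod 2) :=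
  (phi1 m).toAddMonoidHom.prod (phi2 m)

/-- its set-theoretic section. -/
def sig (g : (Fin (m + 1) → ℤ) × (TT m → ZMod 2)) : Sym2 (Fin (m + 1)) → ℤ :=
  EE m g.1 + ∑ t : TT m, (g.2 t).val • BB m t.1

lemma phi_sig (g) : phi m (sig m g) = g := by
  obtain ⟨a, b⟩ := g
  refine Prod.ext ?_ ?_
  · change phi1 m (sig m (a, b)) = a
    simp only [sig, map_add, map_sum, map_nsmul, phi1_EE, phi1_BB, smul_zero,
      Finset.sum_const_zero, add_zero]
  · change phi2 m (sig m (a, b)) = b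
    simp only [sig, map_add, phi2_EE, map_sum, map_nsmul, phi2_BB, zero_add]
    ext t
    rw [Finset.sum_apply, Finset.sum_eq_single t]
    · rw [Pi.smul_apply, Pi.single_eq_same, nsmul_one, ZMod.natCast_zmod_val]
    · intro t' _ h
      rw [Pi.smul_apply, Pi.single_eq_of_ne h.symm, smul_zero]
    · intro h
      exact absurd (Finset.mem_univ t) h

lemma phi_minor (i j : Fin (m + 1)) : phi m (minorVec _ i j) = 0 := by
  refine Prod.ext ?_ ?_
  · change phi1 m (minorVec _ i j) = 0
    simp only [minorVec, map_add, map_sub, map_nsmul, phi1_e]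
    abel
  · change phi2 m (minorVec _ i j) = 0
    ext t
    simp only [minorVec, phi2, AddMonoidHom.coe_mk, ZeroHom.coe_mk, Pi.add_apply, Pi.sub_apply,
      e_diag_TT, Pi.smul_apply]
    have : (2 : ZMod 2) = 0 := rfl
    simp [this]

lemma minor_mem (i j : Fin (m + 1)) : minorVec _ i j ∈ L'lat (m + 1) := by
  rcases lt_trichotomy i j with h | rfl | h
  · exact Submodule.subset_span ⟨i, j, h, rfl⟩
  · have : minorVec (m + 1) i i = 0 := by simp only [minorVec]; abel
    rw [this]
    exact Submodule.zero_mem _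
  · have : minorVec (m + 1) i j = minorVec (m + 1) j i := by
      simp only [minorVec]; rw [e_comm _ i j]; abel
    rw [this]
    exact Submodule.subset_span ⟨j, i, h, rfl⟩

lemma two_BB_mem (s) : (2 : ℤ) • BB m s ∈ L'lat (m + 1) := by
  induction s using Sym2.ind with
  | _ i j =>
    have := Submodule.sub_mem _ (Submodule.add_mem _ (minor_mem m i (Fin.last m))
      (minor_mem m j (Fin.last m))) (minor_mem m i j)
    convert this using 1
    simp only [BB, Sym2.lift_mk, minorVec]
    abel

lemma BB_mem (s : Sym2 (Fin (m + 1))) (hs : s.IsDiag ∨ Fin.last m ∈ s) :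
    BB m s ∈ L'lat (m + 1) := by
  induction s using Sym2.ind with
  | _ i j =>
    simp only [Sym2.mk_isDiag_iff, Sym2.mem_iff] at hs
    rcases hs with h | h | h
    · subst h
      convert minor_mem m i (Fin.last m) using 1
      simp only [BB, Sym2.lift_mk, minorVec]
      abel
    · subst h
      convert Submodule.zero_mem _ using 1
      simp only [BB, Sym2.lift_mk]
      rw [e_comm _ (Fin.last m) j]
      abel
    · subst h
      convert Submodule.zero_mem _ using 1
      simp only [BB, Sym2.lift_mk]
      abel

lemma ker_phi (u) (hu : phi m u = 0) : u ∈ L'lat (m + 1) := by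
  have h1 : phi1 m u = 0 := congrArg Prod.fst hu
  have h2 : phi2 m u = 0 := congrArg Prod.snd hu
  have h3 := EE_phi1 m u
  rw [h1, map_zero] at h3
  rw [sub_eq_zero.1 h3.symm]
  refine Submodule.sum_mem _ fun s _ => ?_
  by_cases hs : s.IsDiag ∨ Fin.last m ∈ s
  · exact Submodule.smul_mem _ _ (BB_mem m s hs)
  · have h4 : ((u s : ℤ) : ZMod 2) = 0 := congrFun h2 ⟨s, hs⟩
    obtain ⟨v, hv⟩ := (ZMod.intCast_zmod_eq_zero_iff_dvd (u s) 2).1 h4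
    rw [hv, mul_comm, mul_smul]
    exact Submodule.smul_mem _ _ (two_BB_mem m s)

lemma toLaurent_gen (k : Type*) [Field k] (i j : Fin (m + 1)) :
    toLaurent (m + 1) k (X s(i, i) * X s(j, j) - X s(i, j) ^ 2) =
      AddMonoidAlgebra.single (e _ i i + e _ j j) (1 : k)
        - AddMonoidAlgebra.single (2 • e _ i j) (1 : k) := by
  simp [toLaurent, e, AddMonoidAlgebra.single_mul_single, AddMonoidAlgebra.single_pow]

lemma main_aux (k : Type*) [Field k] :
    Nonempty ((Laurent (m + 1) k ⧸ Ideal.map (toLaurent (m + 1) k) (Jideal (m + 1) k)) ≃ₐ[k]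
      AddMonoidAlgebra k ((Fin (m + 1) → ℤ) × (TT m → ZMod 2))) := by
  refine algKer k (phi m) (sig m) (phi_sig m) _ ?_ ?_
  · suffices Ideal.map (toLaurent (m + 1) k) (Jideal (m + 1) k) ≤
        RingHom.ker (AddMonoidAlgebra.mapDomainAlgHom k k (phi m)) from fun x hx => this hx
    rw [Jideal, Ideal.map_span, Ideal.span_le]
    rintro _ ⟨_, ⟨i, j, _, rfl⟩, rfl⟩
    have h := phi_minor m i j
    rw [minorVec, map_sub, sub_eq_zero] at h
    rw [SetLike.mem_coe, RingHom.mem_ker, toLaurent_gen, map_sub, sub_eq_zero]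
    simp only [AddMonoidAlgebra.mapDomainAlgHom_apply, AddMonoidAlgebra.mapDomain_single, h]
  · intro u hu
    set I := Ideal.map (toLaurent (m + 1) k) (Jideal (m + 1) k) with hI
    have hL := ker_phi m u hu
    clear hu
    have hadd : ∀ x y : Sym2 (Fin (m + 1)) → ℤ, AddMonoidAlgebra.single x (1 : k) - 1 ∈ I →
        AddMonoidAlgebra.single y (1 : k) - 1 ∈ I →
        AddMonoidAlgebra.single (x + y) (1 : k) - 1 ∈ I := by
      intro x y hx hy
      have := I.add_mem (I.mul_mem_left (AddMonoidAlgebra.single x (1 : k)) hy) hx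
      rw [mul_sub, AddMonoidAlgebra.single_mul_single, mul_one, mul_one] at this
      convert this using 1
      abel
    have hneg : ∀ x : Sym2 (Fin (m + 1)) → ℤ, AddMonoidAlgebra.single x (1 : k) - 1 ∈ I →
        AddMonoidAlgebra.single (-x) (1 : k) - 1 ∈ I := by
      intro x hx
      have := I.neg_mem (I.mul_mem_left (AddMonoidAlgebra.single (-x) (1 : k)) hx)
      rw [mul_sub, AddMonoidAlgebra.single_mul_single, mul_one, mul_one, neg_add_cancel] at this
      convert this using 1
      rw [AddMonoidAlgebra.one_def]
      abel
    rw [L'lat, ← Submodule.mem_toAddSubgroup, Submodule.span_int_eq_addSubgroupClosure] at hL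
    induction hL using AddSubgroup.closure_induction with
    | mem x hx =>
      obtain ⟨i, j, hij, rfl⟩ := hx
      have hg : toLaurent (m + 1) k (X s(i, i) * X s(j, j) - X s(i, j) ^ 2) ∈ I :=
        Ideal.mem_map_of_mem _ (Ideal.subset_span ⟨i, j, hij, rfl⟩)
      rw [toLaurent_gen] at hg
      have := I.mul_mem_left (AddMonoidAlgebra.single (-(2 • e _ i j)) (1 : k)) hg
      rw [mul_sub, AddMonoidAlgebra.single_mul_single, AddMonoidAlgebra.single_mul_single,
        mul_one, neg_add_cancel, ← AddMonoidAlgebra.one_def, neg_add_eq_sub] at this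
      exact this
    | zero => rw [← AddMonoidAlgebra.one_def, sub_self]; exact I.zero_mem
    | add x y _ _ hx hy => exact hadd x y hx hy
    | neg x _ hx => exact hneg x hx

end aux

/-- `k[ℤ^P] / J_n k[ℤ^P] ≅ k[ℤ^n ⊕ (ℤ/2ℤ)^{c_{n-1}}]` as `k`-algebras. -/
theorem laurent_quotient_iso (n : ℕ) (hn : 2 ≤ n) (k : Type*) [Field k] :
    Nonempty ((Laurent n k ⧸ Ideal.map (toLaurent n k) (Jideal n k)) ≃ₐ[k]
      AddMonoidAlgebra k ((Fin n → ℤ) × (Fin (c (n - 1)) → ZMod 2))) := by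
  obtain ⟨m, rfl⟩ : ∃ m, n = m + 1 := ⟨n - 1, by omega⟩
  obtain ⟨f⟩ := main_aux m k
  have hc : Nat.card (TT m) = c (m + 1 - 1) := card_TT m
  have ε : TT m ≃ Fin (c (m + 1 - 1)) := Finite.equivFinOfCardEq hc
  exact ⟨f.trans (AddMonoidAlgebra.domCongr k k
    ((AddEquiv.refl _).prodCongr (AddEquiv.arrowCongr ε (AddEquiv.refl _))))⟩

end Veronese
end

section
/- Suppose char k ≠ 2. Then there exist N = 2^{c_{n−1}} ℤ₂-twistings φ_1, …, φ_N of k[x] such that the ideals φ_1(I_n), …, φ_N(I_n) are pairwise distinct prime ideals and J_n = φ_1(I_n) ∩ ⋯ ∩ φ_N(I_n); this is a prime (hence primary) decomposition of the complete intersection J_n. -/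
open scoped BigOperators

namespace Veronese

open MvPolynomial

variable (n : ℕ)

variable (k : Type*) [Field k]

/-- Scaling of variables by signs. -/
noncomputable def twHom (σ : Sym2 (Fin n) → ℤˣ) : R n k →ₐ[k] R n k :=
  aeval fun s => C (((σ s : ℤ) : k)) * X s

lemma sgn_sq (a : ℤˣ) : ((a : ℤ) : k) * ((a : ℤ) : k) = 1 := by
  rcases Int.units_eq_one_or a with h | h <;> simp [h]

lemma twHom_comp (σ : Sym2 (Fin n) → ℤˣ) :
    (twHom n k σ).comp (twHom n k σ) = AlgHom.id k _ := by
  apply MvPolynomial.algHom_ext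
  intro s
  simp only [twHom, AlgHom.comp_apply, aeval_X, map_mul, algHom_C, AlgHom.id_apply,
    MvPolynomial.algebraMap_eq]
  rw [← mul_assoc, ← C_mul, sgn_sq, C_1, one_mul]

/-- Twisting automorphism attached to a choice of signs. -/
noncomputable def tw (σ : Sym2 (Fin n) → ℤˣ) : R n k ≃ₐ[k] R n k :=
  AlgEquiv.ofAlgHom (twHom n k σ) (twHom n k σ) (twHom_comp n k σ) (twHom_comp n k σ)

lemma tw_isTwisting (σ : Sym2 (Fin n) → ℤˣ) : IsTwisting n k (tw n k σ) := by
  intro s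
  have : tw n k σ (X s) = C (((σ s : ℤ) : k)) * X s := by
    simp [tw, twHom]
  rw [this]
  rcases Int.units_eq_one_or (σ s) with h | h <;> simp [h]

lemma mem_map_tw (σ : Sym2 (Fin n) → ℤˣ) (f : R n k) :
    f ∈ Ideal.map (tw n k σ).toAlgHom (Iideal n k) ↔ veroHom n k (twHom n k σ f) = 0 := by
  have h : Ideal.map (tw n k σ).toAlgHom (Iideal n k)
      = Ideal.comap ((tw n k σ).toRingEquiv.symm) (Iideal n k) :=
    Ideal.map_comap_of_equiv (tw n k σ).toRingEquiv
  rw [h, Ideal.mem_comap]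
  rfl

lemma map_tw_eq (σ : Sym2 (Fin n) → ℤˣ) :
    Ideal.map (tw n k σ).toAlgHom (Iideal n k)
      = RingHom.ker ((veroHom n k).comp (twHom n k σ)) := by
  ext f
  rw [mem_map_tw]
  rfl

/-- Weight of a variable as a finitely supported function. -/
noncomputable def wF (s : Sym2 (Fin n)) : Fin n →₀ ℕ := Finsupp.equivFunOnFinite.symm (wtN n s)

/-- Veronese degree as a finitely supported function. -/
noncomputable def VF (u : Sym2 (Fin n) →₀ ℕ) : Fin n →₀ ℕ := u.sum fun s a => a • wF n s

lemma VF_apply (u : Sym2 (Fin n) →₀ ℕ) (i : Fin n) :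
    VF n u i = ∑ s : Sym2 (Fin n), u s * wtN n s i := by
  rw [VF, Finsupp.sum_fintype _ _ (by simp)]
  simp [wF]

lemma veroHom_X (s : Sym2 (Fin n)) : veroHom n k (X s) = monomial (wF n s) 1 := by
  induction s using Sym2.ind with
  | _ i j =>
    have : wF n s(i, j) = Finsupp.single i 1 + Finsupp.single j 1 := by
      ext l
      simp [wF, wtN, Finsupp.single_apply, eq_comm]
    rw [this]
    rw [veroHom, aeval_X, Sym2.lift_mk]
    simp [X, monomial_mul]

lemma veroHom_monomial (u : Sym2 (Fin n) →₀ ℕ) (a : k) :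
    veroHom n k (monomial u a) = monomial (VF n u) a := by
  have h : ∀ s, Sym2.lift ⟨fun a b => (X a * X b : MvPolynomial (Fin n) k),
      fun a b => mul_comm _ _⟩ s = monomial (wF n s) 1 := by
    intro s
    rw [← veroHom_X]
    simp [veroHom]
  rw [veroHom, aeval_monomial]
  simp only [h, monomial_pow, one_pow]
  rw [Finsupp.prod, ← monomial_sum_one, MvPolynomial.algebraMap_eq, C_mul_monomial, mul_one]
  rfl

/-- Sign by which a twisting acts on a monomial. -/
noncomputable def chi (σ : Sym2 (Fin n) → ℤˣ) (u : Sym2 (Fin n) →₀ ℕ) : k :=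
  ∏ s, (((σ s : ℤ) : k)) ^ u s

lemma twHom_monomial (σ : Sym2 (Fin n) → ℤˣ) (u : Sym2 (Fin n) →₀ ℕ) (a : k) :
    twHom n k σ (monomial u a) = monomial u (a * chi n k σ u) := by
  rw [twHom, aeval_monomial, monomial_eq (s := u) (a := a * chi n k σ u),
    Finsupp.prod_fintype _ _ (by simp), Finsupp.prod_fintype _ _ (by simp)]
  simp only [mul_pow, Finset.prod_mul_distrib, chi, C_mul, map_prod, map_pow,
    MvPolynomial.algebraMap_eq, mul_assoc]

/-- Exponents with off-diagonal entries at most one. -/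
def Nset : Set (Sym2 (Fin n) →₀ ℕ) := {u | ∀ s : Sym2 (Fin n), ¬ s.IsDiag → u s ≤ 1}

lemma minor_mem_s5 (i j : Fin n) : (X s(i, i) * X s(j, j) - X s(i, j) ^ 2 : R n k) ∈ Jideal n k := by
  rcases lt_trichotomy i j with h | h | h
  · exact Ideal.subset_span ⟨i, j, h, rfl⟩
  · subst h
    simp [sq]
  · exact Ideal.subset_span ⟨j, i, h, by rw [mul_comm, Sym2.eq_swap (a := i) (b := j)]⟩

lemma normal_mul_X (s : Sym2 (Fin n)) (g : R n k) (hg : g ∈ restrictSupport k (Nset n)) :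
    ∃ g' ∈ restrictSupport k (Nset n), g * X s - g' ∈ Jideal n k := by
  rw [restrictSupport_eq_span] at hg
  induction hg using Submodule.span_induction with
  | zero => exact ⟨0, Submodule.zero_mem _, by simp⟩
  | add x y _ _ hx hy =>
    obtain ⟨a, ha, ha'⟩ := hx
    obtain ⟨b, hb, hb'⟩ := hy
    refine ⟨a + b, Submodule.add_mem _ ha hb, ?_⟩
    have := Ideal.add_mem _ ha' hb'
    convert this using 1
    ring
  | smul c x _ hx =>
    obtain ⟨a, ha, ha'⟩ := hx
    refine ⟨c • a, Submodule.smul_mem _ _ ha, ?_⟩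
    have := Ideal.mul_mem_left _ (C c) ha'
    convert this using 1
    simp only [smul_eq_C_mul]
    ring
  | mem x hx =>
    obtain ⟨u, hu, rfl⟩ := hx
    induction s using Sym2.ind with
    | _ i j =>
      by_cases h : i ≠ j ∧ u s(i, j) = 1
      · obtain ⟨hij, hu1⟩ := h
        set v := u - Finsupp.single s(i, j) 1 with hv
        have huv : u = v + Finsupp.single s(i, j) 1 := by
          rw [hv, tsub_add_cancel_of_le]
          simp [hu1]
        refine ⟨monomial v 1 * (X s(i, i) * X s(j, j)), ?_, ?_⟩
        · rw [X, X, monomial_mul, monomial_mul, monomial_mem_restrictSupport]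
          left
          intro s hs
          have h1 : s(i, i) ≠ s := by rintro rfl; simp at hs
          have h2 : s(j, j) ≠ s := by rintro rfl; simp at hs
          have := hu s hs
          simp only [Finsupp.add_apply, Finsupp.single_apply, h1, h2, if_false, hv,
            Finsupp.tsub_apply]
          omega
        · have := Ideal.mul_mem_left _ (-(monomial v (1 : k))) (minor_mem_s5 n k i j)
          convert this using 1
          have e1 : (monomial u (1 : k)) = monomial v 1 * X s(i, j) := by
            rw [huv, X, monomial_mul, one_mul]
          simp only [e1]
          ring
      · refine ⟨monomial u 1 * X s(i, j), ?_, by simp⟩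
        rw [X, monomial_mul, monomial_mem_restrictSupport]
        left
        intro s hs
        have := hu s hs
        simp only [Finsupp.add_apply, Finsupp.single_apply]
        split_ifs with h1
        · subst h1
          simp only [Sym2.isDiag_iff_proj_eq] at hs
          have : u s(i, j) ≠ 1 := fun h2 => h ⟨hs, h2⟩
          omega
        · omega

lemma exists_normal (f : R n k) :
    ∃ g ∈ restrictSupport k (Nset n), f - g ∈ Jideal n k := by
  induction f using MvPolynomial.induction_on with
  | C a =>
    refine ⟨C a, ?_, by simp⟩
    rw [← monomial_zero', monomial_mem_restrictSupport]
    left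
    intro s _
    simp
  | add x y hx hy =>
    obtain ⟨a, ha, ha'⟩ := hx
    obtain ⟨b, hb, hb'⟩ := hy
    refine ⟨a + b, Submodule.add_mem _ ha hb, ?_⟩
    have := Ideal.add_mem _ ha' hb'
    convert this using 1
    ring
  | mul_X p s hp =>
    obtain ⟨a, ha, ha'⟩ := hp
    obtain ⟨b, hb, hb'⟩ := normal_mul_X n k s a ha
    refine ⟨b, hb, ?_⟩
    have := Ideal.add_mem _ (Ideal.mul_mem_right (X s) _ ha') hb'
    convert this using 1
    ring

/-- Pairs of distinct indices among the first `m`. -/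
abbrev E (m : ℕ) := {s : Sym2 (Fin m) // ¬ s.IsDiag}

/-- Inclusion of these pairs in all pairs. -/
def inc (m : ℕ) (s : E m) : Sym2 (Fin (m + 1)) := s.1.map Fin.castSucc

lemma inc_injective (m : ℕ) : Function.Injective (inc m) := by
  intro a b h
  exact Subtype.ext (Sym2.map.injective (Fin.castSucc_injective m) h)

/-- Extension of signs by one. -/
noncomputable def ext1 (m : ℕ) (ε : E m → ℤˣ) : Sym2 (Fin (m + 1)) → ℤˣ :=
  Function.extend (inc m) ε 1

lemma ext1_inc (m : ℕ) (ε : E m → ℤˣ) (s : E m) : ext1 m ε (inc m s) = ε s :=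
  (inc_injective m).extend_apply _ _ _

lemma ext1_diag (m : ℕ) (ε : E m → ℤˣ) (i : Fin (m + 1)) : ext1 m ε s(i, i) = 1 := by
  apply Function.extend_apply'
  rintro ⟨⟨a, ha⟩, h⟩
  induction a using Sym2.ind with
  | _ x y =>
    simp [inc] at h
    simp at ha
    exact ha (Fin.castSucc_injective m (h.1.trans h.2.symm))

lemma ext1_last (m : ℕ) (ε : E m → ℤˣ) (i : Fin (m + 1)) : ext1 m ε s(i, Fin.last m) = 1 := by
  apply Function.extend_apply'
  rintro ⟨⟨a, ha⟩, h⟩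
  induction a using Sym2.ind with
  | _ x y =>
    have h1 : Fin.last m ∈ inc m ⟨s(x, y), ha⟩ := by rw [h]; simp
    simp only [inc, Sym2.map_mk, Sym2.mem_iff] at h1
    rcases h1 with h1 | h1
    · exact (Fin.castSucc_lt_last x).ne h1.symm
    · exact (Fin.castSucc_lt_last y).ne h1.symm

lemma ext1_mul (m : ℕ) (ε δ : E m → ℤˣ) (s) :
    ext1 m (ε * δ) s = ext1 m ε s * ext1 m δ s := by
  by_cases h : ∃ a, inc m a = s
  · obtain ⟨a, rfl⟩ := h
    simp [ext1_inc]
  · simp [ext1, Function.extend_apply' _ _ _ h]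

lemma ext1_one (m : ℕ) (s) : ext1 m 1 s = 1 := by
  by_cases h : ∃ a, inc m a = s
  · obtain ⟨a, rfl⟩ := h
    simp [ext1_inc]
  · simp [ext1, Function.extend_apply' _ _ _ h]

/-- The character of the sign group attached to an exponent. -/
noncomputable def chiHom (m : ℕ) (u : Sym2 (Fin (m + 1)) →₀ ℕ) : (E m → ℤˣ) →* k where
  toFun ε := chi (m + 1) k (ext1 m ε) u
  map_one' := by simp [chi, ext1_one]
  map_mul' ε δ := by simp [chi, ext1_mul, mul_pow, Finset.prod_mul_distrib]

lemma chiHom_single (m : ℕ) (u : Sym2 (Fin (m + 1)) →₀ ℕ) (s : E m) :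
    chiHom k m u (Pi.mulSingle s (-1)) = (-1) ^ u (inc m s) := by
  change ∏ t : Sym2 (Fin (m + 1)),
    (((ext1 m (Pi.mulSingle s (-1)) t : ℤˣ) : ℤ) : k) ^ u t = _
  rw [Finset.prod_eq_single (inc m s)]
  · simp [ext1_inc]
  · intro t _ ht
    by_cases h : ∃ a, inc m a = t
    · obtain ⟨a, rfl⟩ := h
      have : a ≠ s := fun h => ht (by rw [h])
      simp [ext1_inc, this]
    · simp [ext1, Function.extend_apply' _ _ _ h]
  · simp

lemma chiHom_inj (hk : (2 : k) ≠ 0) (m : ℕ) (u v : Sym2 (Fin (m + 1)) →₀ ℕ)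
    (hu : u ∈ Nset (m + 1)) (hv : v ∈ Nset (m + 1)) (hV : VF (m + 1) u = VF (m + 1) v)
    (h : chiHom k m u = chiHom k m v) : u = v := by
  have hne : (1 : k) ≠ -1 := by
    intro h
    apply hk
    linear_combination h
  have hE : ∀ x y : Fin m, x ≠ y → u s(x.castSucc, y.castSucc) = v s(x.castSucc, y.castSucc) := by
    intro x y hxy
    have h1 := DFunLike.congr_fun h (Pi.mulSingle (⟨s(x, y), by simpa using hxy⟩ : E m) (-1))
    rw [chiHom_single, chiHom_single] at h1
    have hd : ¬ (s(x.castSucc, y.castSucc)).IsDiag := by simpa using hxy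
    have hu' := hu _ hd
    have hv' := hv _ hd
    simp only [inc, Sym2.map_mk] at h1
    generalize u s(x.castSucc, y.castSucc) = a at *
    generalize v s(x.castSucc, y.castSucc) = b at *
    interval_cases a <;> interval_cases b <;> simp_all
  have hsum : ∀ i, ∑ s, ((u s : ℤ) - v s) * (wtN (m + 1) s i : ℤ) = 0 := by
    intro i
    have h1 := DFunLike.congr_fun hV i
    rw [VF_apply, VF_apply] at h1
    simp only [sub_mul, Finset.sum_sub_distrib]
    exact_mod_cast sub_eq_zero.mpr (congrArg (Nat.cast (R := ℤ)) h1)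
  have hw0 : ∀ (s : Sym2 (Fin (m + 1))) i, i ∉ s → wtN (m + 1) s i = 0 := by
    intro s i
    induction s using Sym2.ind with
    | _ x y =>
      intro h
      simp at h
      simp [wtN, h.1, h.2]
  have hi : ∀ x : Fin m, u s(x.castSucc, x.castSucc) = v s(x.castSucc, x.castSucc) ∧
      u s(x.castSucc, Fin.last m) = v s(x.castSucc, Fin.last m) := by
    intro x
    have h1 := hsum x.castSucc
    have hxl : x.castSucc ≠ Fin.last m := (Fin.castSucc_lt_last x).ne
    rw [Finset.sum_eq_add s(x.castSucc, x.castSucc) s(x.castSucc, Fin.last m)] at h1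
    · have hd : ¬ (s(x.castSucc, Fin.last m)).IsDiag := by simpa using hxl
      have hu' := hu _ hd
      have hv' := hv _ hd
      simp [wtN, hxl] at h1
      omega
    · simpa using hxl
    · rintro s - ⟨hs1, hs2⟩
      by_cases hm : x.castSucc ∈ s
      · obtain ⟨y, rfl⟩ := hm
        have hy : y ≠ Fin.last m := by rintro rfl; exact hs2 rfl
        obtain ⟨z, rfl⟩ := Fin.exists_castSucc_eq.mpr hy
        have : x ≠ z := by rintro rfl; exact hs1 rfl
        rw [hE x z this]
        simp
      · simp [hw0 _ _ hm]
    · simp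
    · simp
  have hl : u s(Fin.last m, Fin.last m) = v s(Fin.last m, Fin.last m) := by
    have h1 := hsum (Fin.last m)
    rw [Finset.sum_eq_single s(Fin.last m, Fin.last m)] at h1
    · simp [wtN] at h1
      omega
    · intro s _ hs
      by_cases hm : Fin.last m ∈ s
      · obtain ⟨y, rfl⟩ := hm
        have hy : y ≠ Fin.last m := by rintro rfl; exact hs rfl
        obtain ⟨z, rfl⟩ := Fin.exists_castSucc_eq.mpr hy
        rw [Sym2.eq_swap, (hi z).2]
        simp
      · simp [hw0 _ _ hm]
    · simp
  ext s
  induction s using Sym2.ind with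
  | _ x y =>
    induction x using Fin.lastCases with
    | last =>
      induction y using Fin.lastCases with
      | last => exact hl
      | cast y => rw [Sym2.eq_swap]; exact (hi y).2
    | cast x =>
      induction y using Fin.lastCases with
      | last => exact (hi x).2
      | cast y =>
        by_cases hxy : x = y
        · subst hxy; exact (hi x).1
        · exact hE x y hxy

lemma normal_eq_zero (hk : (2 : k) ≠ 0) (m : ℕ) (g : R (m + 1) k)
    (hg : g ∈ restrictSupport k (Nset (m + 1)))
    (h : ∀ ε : E m → ℤˣ, veroHom (m + 1) k (twHom (m + 1) k (ext1 m ε) g) = 0) : g = 0 := by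
  classical
  rw [mem_restrictSupport_iff] at hg
  by_contra hne
  obtain ⟨u₀, hu₀⟩ := Finset.nonempty_iff_ne_empty.mpr (mt support_eq_empty.mp hne)
  set b := VF (m + 1) u₀
  set T := g.support.filter (fun u => VF (m + 1) u = b) with hT
  have hli : LinearIndependent k (fun u : T => (chiHom k m u.1 : (E m → ℤˣ) → k)) := by
    refine (linearIndependent_monoidHom (E m → ℤˣ) k).comp (fun u : T => chiHom k m u.1) ?_
    rintro ⟨u, hu⟩ ⟨v, hv⟩ huv
    rw [hT, Finset.mem_filter] at hu hv
    exact Subtype.ext (chiHom_inj k hk m u v (hg hu.1) (hg hv.1) (hu.2.trans hv.2.symm) huv)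
  rw [Fintype.linearIndependent_iff] at hli
  have h0 := hli (fun u => coeff u.1 g) ?_ ⟨u₀, by simp [hT, hu₀, b, - mem_support_iff]⟩
  · exact (mem_support_iff.mp hu₀) h0
  · ext ε
    have h1 := congrArg (coeff b) (h ε)
    rw [g.as_sum, map_sum, map_sum, coeff_sum] at h1
    simp only [twHom_monomial, veroHom_monomial, coeff_monomial, coeff_zero] at h1
    rw [← Finset.sum_filter] at h1
    rw [← Finset.sum_coe_sort] at h1
    rw [Finset.sum_apply]
    exact h1

lemma Jideal_le (m : ℕ) (ε : E m → ℤˣ) :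
    Jideal (m + 1) k ≤ Ideal.map (tw (m + 1) k (ext1 m ε)).toAlgHom (Iideal (m + 1) k) := by
  rw [Jideal, Ideal.span_le]
  rintro _ ⟨i, j, -, rfl⟩
  rw [SetLike.mem_coe, mem_map_tw]
  simp only [twHom, map_sub, map_mul, map_pow, aeval_X, ext1_diag, mul_pow]
  rw [← map_pow, ← map_pow, sq (Int.cast _ : k), sgn_sq]
  simp [veroHom]
  ring

lemma map_tw_injective (hk : (2 : k) ≠ 0) (m : ℕ) : Function.Injective
    (fun ε : E m → ℤˣ => Ideal.map (tw (m + 1) k (ext1 m ε)).toAlgHom (Iideal (m + 1) k)) := by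
  intro ε δ h
  dsimp only at h
  ext1 ⟨s, hs⟩
  induction s using Sym2.ind with
  | _ x y =>
    have key : ∀ η : E m → ℤˣ,
        (X s(x.castSucc, y.castSucc) * X s(Fin.last m, Fin.last m)
          - C (((ε ⟨s(x, y), hs⟩ : ℤ) : k)) *
            (X s(x.castSucc, Fin.last m) * X s(y.castSucc, Fin.last m)) : R (m + 1) k) ∈
          Ideal.map (tw (m + 1) k (ext1 m η)).toAlgHom (Iideal (m + 1) k) ↔
        ((η ⟨s(x, y), hs⟩ : ℤ) : k) = ((ε ⟨s(x, y), hs⟩ : ℤ) : k) := by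
      intro η
      have hinc : ext1 m η s(x.castSucc, y.castSucc) = η ⟨s(x, y), hs⟩ :=
        ext1_inc m η ⟨s(x, y), hs⟩
      rw [mem_map_tw]
      have : veroHom (m + 1) k (twHom (m + 1) k (ext1 m η)
          (X s(x.castSucc, y.castSucc) * X s(Fin.last m, Fin.last m)
          - C (((ε ⟨s(x, y), hs⟩ : ℤ) : k)) *
            (X s(x.castSucc, Fin.last m) * X s(y.castSucc, Fin.last m)))) =
          C (((η ⟨s(x, y), hs⟩ : ℤ) : k) - ((ε ⟨s(x, y), hs⟩ : ℤ) : k)) *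
            (X x.castSucc * X y.castSucc * (X (Fin.last m) * X (Fin.last m))) := by
        simp only [twHom, map_sub, map_mul, aeval_X, ext1_diag, ext1_last, hinc, algHom_C,
          MvPolynomial.algebraMap_eq]
        simp [veroHom, algHom_C, - map_intCast]
        ring
      rw [this, mul_eq_zero, C_eq_zero, sub_eq_zero]
      simp [X_ne_zero]
    have h1 := (key ε).mpr rfl
    rw [h, key δ] at h1
    have hne : (1 : k) ≠ -1 := by
      intro h
      apply hk
      linear_combination h
    rcases Int.units_eq_one_or (ε ⟨s(x, y), hs⟩) with h2 | h2 <;>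
    rcases Int.units_eq_one_or (δ ⟨s(x, y), hs⟩) with h3 | h3 <;>
    rw [h2, h3] at h1 ⊢ <;> simp at h1
    · exact absurd h1.symm hne
    · exact absurd h1 hne

/-- If `char k ≠ 2`, there are `2^{c_{n-1}}` ℤ₂-twistings `φ_i` such
that the `φ_i(I_n)` are pairwise distinct prime ideals and
`J_n = φ_1(I_n) ∩ ⋯ ∩ φ_N(I_n)` is a prime decomposition. -/
theorem principal_minor_ideal_prime_decomposition (n : ℕ) (hn : 2 ≤ n)
    (k : Type*) [Field k] (hk : (2 : k) ≠ 0) :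
    ∃ φ : Fin (2 ^ c (n - 1)) → (R n k ≃ₐ[k] R n k),
      (∀ i, IsTwisting n k (φ i)) ∧
      (∀ i, (Ideal.map (φ i).toAlgHom (Iideal n k)).IsPrime) ∧
      (Function.Injective fun i => Ideal.map (φ i).toAlgHom (Iideal n k)) ∧
      Jideal n k = ⨅ i, Ideal.map (φ i).toAlgHom (Iideal n k) := by
  obtain ⟨m, rfl⟩ : ∃ m, n = m + 1 := ⟨n - 1, by omega⟩
  have hcard : Fintype.card (E m → ℤˣ) = 2 ^ c m := by
    rw [Fintype.card_fun, Sym2.card_subtype_not_diag]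
    simp [c]
  let q : Fin (2 ^ c (m + 1 - 1)) ≃ (E m → ℤˣ) := (Fintype.equivFinOfCardEq hcard).symm
  refine ⟨fun i => tw (m + 1) k (ext1 m (q i)), fun i => tw_isTwisting _ _ _, ?_, ?_, ?_⟩
  · intro i
    rw [map_tw_eq]
    exact RingHom.ker_isPrime _
  · exact (map_tw_injective k hk m).comp q.injective
  · apply le_antisymm
    · exact le_iInf fun i => Jideal_le k m (q i)
    · intro f hf
      obtain ⟨g, hg, hfg⟩ := exists_normal (m + 1) k f
      have hg0 : g = 0 := by
        apply normal_eq_zero k hk m g hg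
        intro ε
        rw [← mem_map_tw]
        have h1 := (Ideal.mem_iInf.mp hf) (q.symm ε)
        simp only [Equiv.apply_symm_apply] at h1
        have h2 := Ideal.sub_mem _ h1 (Jideal_le k m ε hfg)
        simpa using h2
      simpa [hg0] using hfg

end Veronese
end
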